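/- Let k be a field of characteristic p > 0 and let α ∈ k((x)) be an element transcendental over the subfield k(x) of rational functions. Then E := k((x))((t))[Y]/(Y^p − Y − α·t^{−1}) is a Galois field extension of k((x))((t)) of degree p, and E is not induced by any degree p field extension of k((t))(x): there is no field extension E' of k((t))(x) with [E' : k((t))(x)] = p such that E' ⊗_{k((t))(x)} k((x))((t)) ≅ E as k((x))((t))-algebras. -/

import Mathlib

open Polynomial

open scoped TensorProduct

attribute [local instance] Algebra.TensorProduct.rightAlgebra

/-- The ring homomorphism `k₁((t)) →+* k₂((t))` applying a ring homomorphism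
`f : k₁ →+* k₂` to each coefficient of a Laurent series. -/
noncomputable def lsMap {R S : Type*} [CommRing R] [CommRing S]
    (f : R →+* S) : LaurentSeries R →+* LaurentSeries S where
  toFun x := x.map f
  map_one' := by ext g; by_cases h : g = 0 <;> simp [h]
  map_mul' x y := HahnSeries.map_mul f.toNonUnitalRingHom
  map_zero' := by ext g; simp
  map_add' x y := HahnSeries.map_add f.toAddMonoidHom

/-- A type synonym for the Laurent series field `k((x))`, so that `k((x))((t))` is
`LaurentSeries (Kx k)`. -/
def Kx (k : Type) [Field k] : Type := LaurentSeries k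

noncomputable instance (k : Type) [Field k] : Field (Kx k) :=
  inferInstanceAs (Field (LaurentSeries k))

/-- The coercion `RatFunc F → LaurentSeries F` as bundled alg hom (formerly in Mathlib). -/
noncomputable def RatFunc.coeAlgHom (F : Type*) [Field F] : RatFunc F →ₐ[F[X]] LaurentSeries F :=
  RatFunc.liftAlgHom (Algebra.ofId _ _) <|
    nonZeroDivisors_le_comap_nonZeroDivisors_of_injective _ <|
      Polynomial.algebraMap_hahnSeries_injective _

/-- The canonical embedding of the rational function field `k(x)` into `k((x))`. -/
noncomputable instance (k : Type) [Field k] : Algebra (RatFunc k) (Kx k) :=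
  (((RatFunc.coeAlgHom k).toRingHom : RatFunc k →+* Kx k)).toAlgebra

/-!
Write `K = L((t))` and let `y` be a root of `Y ^ p - Y - a` with `a = α t ^ n`. Conjugates of `y`
differ from it by elements of the prime field, so if `E = K(y)` is of the form `E' ⊗[F] K`, then
averaging against an element of `E'` with nonzero trace splits this cocycle over the elements of `E`
algebraic over `F`: some `b` in `K` makes `y - b`, and hence `a - (b ^ p - b)`, algebraic over `F`.
As `F` lies in `M((t))`, all coefficients of `a - (b ^ p - b)` are algebraic over `M`. Since
`b ^ p` has coefficient `(b_i) ^ p` at `t ^ (p i)`, comparing the coefficients at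
`n, n p, n p ^ 2, …`, where those of `b` are eventually zero, shows that `α` is algebraic over `M`.
The case `b ^ p - b = a` of the same comparison gives irreducibility.
-/

section ArtinSchreier

theorem isAlgebraic_of_fieldRange_le {F K₀ K : Type*} [Field F] [Field K₀] [Field K]
    [Algebra F K] [Algebra K₀ K] (h : (algebraMap F K).fieldRange ≤ (algebraMap K₀ K).fieldRange)
    {z : K} (hz : IsAlgebraic F z) : IsAlgebraic K₀ z := by
  choose φ hφ using fun f : F ↦ h ⟨f, rfl⟩
  have hinj := (algebraMap K₀ K).injective
  let Φ : F →+* K₀ :=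
    { toFun := φ
      map_one' := hinj (by simp [hφ])
      map_mul' := fun x y ↦ hinj (by simp [hφ])
      map_zero' := hinj (by simp [hφ])
      map_add' := fun x y ↦ hinj (by simp [hφ]) }
  exact hz.ringHom_of_comp_eq Φ (RingHom.id K) Φ.injective (RingHom.ext hφ)

-- Additive Hilbert 90: averaging against `θ` splits the cocycle `τ ↦ y - τ y` with values in `B`.
theorem exists_sub_algebraMap_mem_of_forall_sub_mem {K E : Type*} [Field K] [Field E]
    [Algebra K E] [FiniteDimensional K E] [IsGalois K E] (B : Subfield E) {θ y : E}
    (hθ : ∀ τ : Gal(E/K), τ θ ∈ B) (htr : Algebra.trace K E θ ≠ 0)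
    (hy : ∀ τ : Gal(E/K), y - τ y ∈ B) : ∃ b : K, y - algebraMap K E b ∈ B := by
  set T := Algebra.trace K E
  have hT : algebraMap K E (T θ) ∈ B :=
    trace_eq_sum_automorphisms (K := K) θ ▸ sum_mem fun τ _ ↦ hθ τ
  have hsum : algebraMap K E (T θ) * y - algebraMap K E (T (θ * y)) =
      ∑ τ : Gal(E/K), τ θ * (y - τ y) := by
    simp only [T, trace_eq_sum_automorphisms, Finset.sum_mul, ← Finset.sum_sub_distrib, map_mul,
      mul_sub]
  have hT0 : algebraMap K E (T θ) ≠ 0 := by simpa using htr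
  refine ⟨T (θ * y) / T θ, ?_⟩
  have heq : y - algebraMap K E (T (θ * y) / T θ) =
      (algebraMap K E (T θ))⁻¹ * ∑ τ : Gal(E/K), τ θ * (y - τ y) := by
    rw [← hsum, map_div₀]
    field_simp
  rw [heq]
  exact mul_mem (inv_mem hT) (sum_mem fun τ _ ↦ mul_mem (hθ τ) (hy τ))

theorem monic_X_pow_sub_X_sub_C {R : Type*} [CommRing R] [Nontrivial R] {p : ℕ} (hp : 1 < p)
    (a : R) : (X ^ p - X - C a).Monic := by
  rw [sub_sub]
  exact monic_X_pow_sub (by rw [degree_X_add_C]; exact_mod_cast hp)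

theorem natDegree_X_pow_sub_X_sub_C {R : Type*} [CommRing R] [Nontrivial R] {p : ℕ} (hp : 1 < p)
    (a : R) : (X ^ p - X - C a).natDegree = p := by
  rw [sub_sub, natDegree_sub_eq_left_of_natDegree_lt] <;> simp [hp]

theorem finrank_adjoinRoot_X_pow_sub_X_sub_C {R : Type*} [CommRing R] [Nontrivial R] {p : ℕ}
    (hp : 1 < p) (a : R) : Module.finrank R (AdjoinRoot (X ^ p - X - C a)) = p := by
  rw [(AdjoinRoot.powerBasis' (monic_X_pow_sub_X_sub_C hp a)).finrank, AdjoinRoot.powerBasis'_dim,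
    natDegree_X_pow_sub_X_sub_C hp]

theorem separable_X_pow_sub_X_sub_C {R : Type*} [CommRing R] (p : ℕ) [CharP R p] (a : R) :
    (X ^ p - X - C a).Separable := by
  have hderiv : derivative (X ^ p - X - C a) = -1 := by
    simp [derivative_X_pow]
  rw [separable_def, hderiv]
  exact isCoprime_one_right.neg_right

theorem root_pow_sub_root_eq_of_dvd {R : Type*} [CommRing R] {p : ℕ} {a : R} {g : R[X]}
    (hg : g ∣ X ^ p - X - C a) :
    AdjoinRoot.root g ^ p - AdjoinRoot.root g = algebraMap R (AdjoinRoot g) a := by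
  have hroot : aeval (AdjoinRoot.root g) (X ^ p - X - C a) = 0 :=
    aeval_eq_zero_of_dvd_aeval_eq_zero hg (by simp)
  simpa [sub_eq_zero] using hroot

variable {p : ℕ} [Fact p.Prime] {K E : Type*} [Field K] [Field E] [Algebra K E] [CharP K p]
  {a : K} {y : E}

theorem splits_map_X_pow_sub_X_sub_C (hy : y ^ p - y = algebraMap K E a) :
    ((X ^ p - X - C a).map (algebraMap K E)).Splits := by
  have : CharP E p := charP_of_injective_algebraMap (algebraMap K E).injective p
  let _ := ZMod.algebra E p
  have htranslate : (X ^ p - X - C a).map (algebraMap K E) =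
      ((X ^ p - X : (ZMod p)[X]).map (algebraMap (ZMod p) E)).comp (X - C y) := by
    simp only [Polynomial.map_sub, Polynomial.map_pow, map_X, map_C, sub_comp, pow_comp, X_comp,
      sub_pow_char, ← hy, C_sub, C_pow]
    ring
  rw [htranslate]
  exact ((GaloisField.splits_zmod_X_pow_sub_X p).map _).comp_X_sub_C y

theorem isGalois_of_pow_sub_self_eq (hy : y ^ p - y = algebraMap K E a)
    (hgen : Algebra.adjoin K {y} = ⊤) : IsGalois K E := by
  have : (X ^ p - X - C a).IsSplittingField K E :=
    { splits' := splits_map_X_pow_sub_X_sub_C hy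
      adjoin_rootSet' := by
        rw [eq_top_iff, ← hgen]
        refine Algebra.adjoin_mono (Set.singleton_subset_iff.2 (mem_rootSet.2 ⟨?_, ?_⟩))
        · exact (monic_X_pow_sub_X_sub_C (Fact.out : p.Prime).one_lt a).ne_zero
        · simp [hy] }
  exact IsGalois.of_separable_splitting_field (separable_X_pow_sub_X_sub_C p a)

theorem isGalois_adjoinRoot_X_pow_sub_X_sub_C [Fact (Irreducible (X ^ p - X - C a))] :
    IsGalois K (AdjoinRoot (X ^ p - X - C a)) :=
  isGalois_of_pow_sub_self_eq (root_pow_sub_root_eq_of_dvd dvd_rfl) AdjoinRoot.adjoinRoot_eq_top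

theorem sub_algEquiv_apply_mem_bot (hy : y ^ p - y = algebraMap K E a) (τ : Gal(E/K)) :
    y - τ y ∈ (⊥ : Subfield E) := by
  have : CharP E p := charP_of_injective_algebraMap (algebraMap K E).injective p
  have hτy : τ y ^ p - τ y = algebraMap K E a := by
    rw [← map_pow, ← map_sub, hy, τ.commutes]
  rw [Subfield.mem_bot_iff_pow_eq_self E p, sub_pow_char]
  linear_combination hy - hτy

theorem algebraMap_sub_pow_sub_self (hy : y ^ p - y = algebraMap K E a) (b : K) :
    algebraMap K E (a - (b ^ p - b)) =
      (y - algebraMap K E b) ^ p - (y - algebraMap K E b) := by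
  have : CharP E p := charP_of_injective_algebraMap (algebraMap K E).injective p
  rw [sub_pow_char, map_sub, map_sub, map_pow, ← hy]
  ring

theorem exists_pow_sub_self_eq_of_not_dvd_finrank [FiniteDimensional K E] [IsGalois K E]
    (hy : y ^ p - y = algebraMap K E a) (hdvd : ¬ p ∣ Module.finrank K E) :
    ∃ b : K, b ^ p - b = a := by
  have : CharP E p := charP_of_injective_algebraMap (algebraMap K E).injective p
  have htr : Algebra.trace K E 1 ≠ 0 := by
    rw [← map_one (algebraMap K E), Algebra.trace_algebraMap, nsmul_one, Ne,
      CharP.cast_eq_zero_iff K p]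
    exact hdvd
  obtain ⟨b, hb⟩ := exists_sub_algebraMap_mem_of_forall_sub_mem ⊥
    (fun τ ↦ by rw [map_one]; exact one_mem _) htr (sub_algEquiv_apply_mem_bot hy)
  rw [Subfield.mem_bot_iff_pow_eq_self E p] at hb
  have hzero : algebraMap K E (a - (b ^ p - b)) = 0 := by
    rw [algebraMap_sub_pow_sub_self hy, hb, sub_self]
  exact ⟨b, (sub_eq_zero.1 ((map_eq_zero _).1 hzero)).symm⟩

theorem irreducible_X_pow_sub_X_sub_C (h : ∀ b : K, b ^ p - b ≠ a) :
    Irreducible (X ^ p - X - C a) := by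
  have hp : p.Prime := Fact.out
  have hmonic := monic_X_pow_sub_X_sub_C hp.one_lt a
  have hdeg := natDegree_X_pow_sub_X_sub_C hp.one_lt a
  have hunit : ¬ IsUnit (X ^ p - X - C a) := fun hu ↦
    hp.ne_zero (hdeg ▸ natDegree_eq_zero_of_isUnit hu)
  obtain ⟨g, hg_monic, hg_irr, hg_dvd⟩ := exists_monic_irreducible_factor _ hunit
  have := Fact.mk hg_irr
  let pb := AdjoinRoot.powerBasis hg_irr.ne_zero
  have hroot := root_pow_sub_root_eq_of_dvd hg_dvd
  have := isGalois_of_pow_sub_self_eq hroot (AdjoinRoot.adjoinRoot_eq_top)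
  have := pb.finite
  have hp_dvd : p ∣ g.natDegree := by
    by_contra hdvd
    rw [← AdjoinRoot.powerBasis_dim hg_irr.ne_zero, ← pb.finrank] at hdvd
    obtain ⟨b, hb⟩ := exists_pow_sub_self_eq_of_not_dvd_finrank hroot hdvd
    exact h b hb
  have hp_le := Nat.le_of_dvd hg_irr.natDegree_pos hp_dvd
  rwa [eq_of_monic_of_dvd_of_natDegree_le hg_monic hmonic hg_dvd (hdeg.trans_le hp_le)]

end ArtinSchreier

section TensorProduct

theorem finiteDimensional_of_tensorProduct_algEquiv {F K E E' : Type*} [Field F] [Field K] [Ring E]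
    [Nontrivial E] [CommRing E'] [Algebra F K] [Algebra K E] [Algebra F E'] [FiniteDimensional K E]
    (e : E' ⊗[F] K ≃ₐ[K] E) : FiniteDimensional F E' := by
  apply FiniteDimensional.of_finrank_pos
  rw [← Module.finrank_baseChange (R := K),
    ((Algebra.TensorProduct.commRight F K E').trans e).toLinearEquiv.finrank_eq]
  exact Module.finrank_pos

variable {F K E E' : Type*} [Field F] [Field K] [Field E] [CommRing E'] [Algebra F K]
  [Algebra K E] [Algebra F E']

theorem exists_trace_tmul_one_ne_zero [FiniteDimensional K E] [Algebra.IsSeparable K E]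
    (e : E' ⊗[F] K ≃ₐ[K] E) : ∃ u : E', Algebra.trace K E (e (u ⊗ₜ 1)) ≠ 0 := by
  by_contra! h
  refine Algebra.trace_ne_zero K E (LinearMap.ext fun z ↦ ?_)
  obtain ⟨w, rfl⟩ := e.surjective z
  induction w using TensorProduct.induction_on with
  | zero => simp
  | add v w hv hw => rw [map_add, map_add, hv, hw, map_add]
  | tmul u c =>
    have hsmul : u ⊗ₜ[F] c = c • (u ⊗ₜ[F] (1 : K)) := by
      simp [Algebra.smul_def, Algebra.TensorProduct.right_algebraMap_apply]
    rw [hsmul, map_smul, map_smul, h u]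
    simp

variable [Algebra F E] [IsScalarTower F K E]

theorem exists_isAlgebraic_sub_pow_sub_self [FiniteDimensional K E] [IsGalois K E]
    (e : E' ⊗[F] K ≃ₐ[K] E) {p : ℕ} [Fact p.Prime] [CharP K p] {y : E} {a : K}
    (hy : y ^ p - y = algebraMap K E a) : ∃ b : K, IsAlgebraic F (a - (b ^ p - b)) := by
  have := finiteDimensional_of_tensorProduct_algEquiv e
  let i : E' →ₐ[F] E :=
    (e.restrictScalars F : E' ⊗[F] K →ₐ[F] E).comp Algebra.TensorProduct.includeLeft
  let B : Subfield E := (algebraicClosure F E).toSubfield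
  have hB {z : E} : z ∈ B ↔ IsAlgebraic F z := mem_algebraicClosure_iff
  obtain ⟨u, hu⟩ := exists_trace_tmul_one_ne_zero e
  have hθ (τ : Gal(E/K)) : τ (i u) ∈ B :=
    hB.2 (((Algebra.IsAlgebraic.isAlgebraic u).algHom i).algHom (τ.restrictScalars F).toAlgHom)
  have hsub (τ : Gal(E/K)) : y - τ y ∈ B :=
    (bot_le : (⊥ : Subfield E) ≤ B) (sub_algEquiv_apply_mem_bot hy τ)
  obtain ⟨b, hb⟩ := exists_sub_algebraMap_mem_of_forall_sub_mem B hθ hu hsub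
  refine ⟨b, (isAlgebraic_algebraMap_iff (algebraMap K E).injective).1 ?_⟩
  rw [algebraMap_sub_pow_sub_self hy, ← hB]
  exact sub_mem (pow_mem hb p) hb

end TensorProduct

section PowerSeries

open scoped PowerSeries

theorem isAlgebraic_constantCoeff {M L : Type*} [Field M] [Field L] [Algebra M L] {g : L⟦X⟧}
    (hg : IsAlgebraic M⟦X⟧ g) : IsAlgebraic M (PowerSeries.constantCoeff g) := by
  obtain ⟨P, hP, hPg⟩ := hg
  have hX : ¬ IsUnit (C (PowerSeries.X : M⟦X⟧)) := by
    rw [isUnit_C]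
    exact PowerSeries.X_prime.not_isUnit
  -- Without its factors of `X`, the annihilating polynomial stays nonzero modulo `X`.
  obtain ⟨n, Q, hQ, rfl⟩ := WfDvdMonoid.max_power_factor' hP hX
  have hQg : aeval g Q = 0 := by
    have hX0 : algebraMap M⟦X⟧ L⟦X⟧ PowerSeries.X ≠ 0 := by
      simp [PowerSeries.algebraMap_apply'', PowerSeries.X_ne_zero]
    simpa [hX0] using hPg
  refine ⟨Q.map PowerSeries.constantCoeff, fun hQ0 ↦ hQ ?_, ?_⟩
  · rw [C_dvd_iff_dvd_coeff]
    intro i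
    rw [PowerSeries.X_dvd_iff, ← coeff_map, hQ0, coeff_zero]
  · have hcomp : (algebraMap M L).comp (PowerSeries.constantCoeff (R := M)) =
        (PowerSeries.constantCoeff (R := L)).comp (algebraMap M⟦X⟧ L⟦X⟧) := by
      ext f
      rw [RingHom.comp_apply, RingHom.comp_apply, PowerSeries.algebraMap_apply'',
        ← PowerSeries.coeff_zero_eq_constantCoeff_apply,
        ← PowerSeries.coeff_zero_eq_constantCoeff_apply, PowerSeries.coeff_map]
    rw [aeval_def, eval₂_map, hcomp, ← hom_eval₂, ← aeval_def, hQg, map_zero]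

theorem isAlgebraic_powerSeries_coeff {M L : Type*} [Field M] [Field L] [Algebra M L] {g : L⟦X⟧}
    (hg : IsAlgebraic M⟦X⟧ g) (n : ℕ) : IsAlgebraic M (PowerSeries.coeff n g) := by
  induction n generalizing g with
  | zero => simpa using isAlgebraic_constantCoeff hg
  | succ n ih =>
    let shift := PowerSeries.mk fun i ↦ PowerSeries.coeff (i + 1) g
    have hconst : IsAlgebraic M⟦X⟧ (PowerSeries.C (PowerSeries.constantCoeff g)) :=
      (isAlgebraic_constantCoeff hg).ringHom_of_comp_eq PowerSeries.C PowerSeries.C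
        PowerSeries.C_injective (by ext; simp [PowerSeries.algebraMap_apply''])
    have hshift : algebraMap M⟦X⟧ L⟦X⟧ PowerSeries.X * shift =
        g - PowerSeries.C (PowerSeries.constantCoeff g) := by
      rw [PowerSeries.algebraMap_apply'', PowerSeries.map_X, ← PowerSeries.sub_const_eq_X_mul_shift]
    have : IsAlgebraic M⟦X⟧ shift := by
      have h := hg.sub hconst
      rw [← hshift, ← Algebra.smul_def] at h
      exact h.of_smul (mem_nonZeroDivisors_of_ne_zero PowerSeries.X_ne_zero)
    simpa [shift] using ih this

theorem powerSeries_coeff_pow_char {p : ℕ} [Fact p.Prime] {L : Type*} [CommRing L] [CharP L p]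
    (g : L⟦X⟧) (n : ℕ) :
    PowerSeries.coeff n (g ^ p) = if p ∣ n then PowerSeries.coeff (n / p) g ^ p else 0 := by
  have hp : p ≠ 0 := (Fact.out : p.Prime).ne_zero
  have hfrob : (g.expand p hp).map (frobenius L p) = g ^ p :=
    MvPowerSeries.map_frobenius_expand p hp
  rw [← hfrob, PowerSeries.coeff_map, PowerSeries.coeff_expand]
  split_ifs <;> simp [frobenius_def, hp]

end PowerSeries

section LaurentSeries

open scoped PowerSeries LaurentSeries

theorem lsMap_single {R S : Type*} [CommRing R] [CommRing S] (f : R →+* S) (n : ℤ) (a : R) :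
    lsMap f (HahnSeries.single n a) = HahnSeries.single n (f a) :=
  HahnSeries.map_single f.toMonoidWithZeroHom.toZeroHom

theorem lsMap_coe_powerSeries {R S : Type*} [CommRing R] [CommRing S] (f : R →+* S) (g : R⟦X⟧) :
    lsMap f (g : R⸨X⸩) = (PowerSeries.map f g : S⸨X⸩) := by
  ext i
  change f ((g : R⸨X⸩).coeff i) = _
  rw [PowerSeries.coeff_coe, PowerSeries.coeff_coe, PowerSeries.coeff_map, apply_ite f, map_zero]

theorem charP_laurentSeries (p : ℕ) (L : Type*) [CommRing L] [CharP L p] : CharP L⸨X⸩ p :=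
  charP_of_injective_ringHom (f := HahnSeries.C) HahnSeries.C_injective p

variable {p : ℕ} [Fact p.Prime]

theorem laurentSeries_coeff_pow_char {L : Type*} [CommRing L] [CharP L p] (b : L⸨X⸩) (n : ℤ) :
    (b ^ p).coeff n = if (p : ℤ) ∣ n then b.coeff (n / p) ^ p else 0 := by
  have hp : 0 < p := (Fact.out : p.Prime).pos
  obtain ⟨o, g, rfl⟩ : ∃ (o : ℤ) (g : L⟦X⟧), HahnSeries.single o 1 * (g : L⸨X⸩) = b :=
    ⟨_, _, b.single_order_mul_powerSeriesPart⟩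
  have coeff_shift (o : ℤ) (g : L⟦X⟧) (m : ℤ) :
      (HahnSeries.single o 1 * (g : L⸨X⸩)).coeff m = (g : L⸨X⸩).coeff (m - o) := by
    rw [← sub_add_cancel m o, HahnSeries.coeff_single_mul_add, one_mul, add_sub_cancel_right]
  rw [mul_pow, HahnSeries.single_pow, one_pow, ← PowerSeries.coe_pow, coeff_shift, coeff_shift]
  simp only [PowerSeries.coeff_coe, powerSeries_coeff_pow_char, nsmul_eq_mul]
  by_cases hn : (p : ℤ) ∣ n
  · obtain ⟨m, rfl⟩ := hn
    rw [Int.mul_ediv_cancel_left _ (by lia), if_pos (dvd_mul_right _ _), ← mul_sub]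
    rcases lt_or_ge (m - o) 0 with hlt | hge
    · rw [if_pos hlt, if_pos (by nlinarith), zero_pow hp.ne']
    · rw [if_neg hge.not_gt, if_neg (by nlinarith), Int.natAbs_mul, Int.natAbs_natCast,
        Nat.mul_div_cancel_left _ hp, if_pos (dvd_mul_right _ _)]
  · have : ¬ p ∣ (n - p * o).natAbs := by
      rwa [← Int.natCast_dvd, dvd_sub_left (dvd_mul_right _ _)]
    simp only [if_neg hn, if_neg this, ite_self]

theorem isAlgebraic_of_isAlgebraic_coeff_single_sub {M L : Type*} [Field M] [Field L] [Algebra M L]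
    [CharP L p] {n : ℤ} (hn : n < 0) (hpn : ¬ (p : ℤ) ∣ n) {α : L} (b : L⸨X⸩)
    (h : ∀ i, IsAlgebraic M ((HahnSeries.single n α - (b ^ p - b)).coeff i)) :
    IsAlgebraic M α := by
  have hp : p.Prime := Fact.out
  have hstep (j : ℕ) (hj : IsAlgebraic M (b.coeff (n * p ^ (j + 1)))) :
      IsAlgebraic M (b.coeff (n * p ^ j)) := by
    have hne : n * p ^ (j + 1) ≠ n := fun heq ↦
      hpn (heq ▸ (dvd_pow_self _ j.succ_ne_zero).mul_left n)
    have hcoeff : (b ^ p).coeff (n * p ^ (j + 1)) = b.coeff (n * p ^ j) ^ p := by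
      have : (p : ℤ) ≠ 0 := by exact_mod_cast hp.ne_zero
      rw [laurentSeries_coeff_pow_char, pow_succ, ← mul_assoc, if_pos (dvd_mul_left _ _),
        Int.mul_ediv_cancel _ this]
    have hi := h (n * p ^ (j + 1))
    rw [HahnSeries.coeff_sub, HahnSeries.coeff_sub, hcoeff, HahnSeries.coeff_single_of_ne hne] at hi
    exact .of_pow hp.pos (by simpa using hj.sub hi)
  have hlarge : IsAlgebraic M (b.coeff (n * p ^ b.order.natAbs)) := by
    rw [HahnSeries.coeff_eq_zero_of_lt_order]
    · exact isAlgebraic_zero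
    · have : (b.order.natAbs : ℤ) < p ^ b.order.natAbs := by
        exact_mod_cast Nat.lt_pow_self hp.one_lt
      have : n * p ^ b.order.natAbs ≤ -p ^ b.order.natAbs := by nlinarith
      omega
  have hzero : IsAlgebraic M (b.coeff n) := by
    simpa using Nat.decreasingInduction (motive := fun j _ ↦ IsAlgebraic M (b.coeff (n * p ^ j)))
      (fun j _ ↦ hstep j) hlarge (Nat.zero_le _)
  have hi := h n
  rw [HahnSeries.coeff_sub, HahnSeries.coeff_sub, laurentSeries_coeff_pow_char, if_neg hpn,
    HahnSeries.coeff_single_same] at hi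
  simpa using hi.sub hzero

variable {M L : Type*} [Field M] [Field L] [Algebra M L]

theorem isAlgebraic_laurentSeries_coeff {F : Type*} [Field F] [Algebra F L⸨X⸩]
    (hF : (algebraMap F L⸨X⸩).fieldRange ≤ (lsMap (algebraMap M L)).fieldRange) {f : L⸨X⸩}
    (hf : IsAlgebraic F f) (n : ℤ) : IsAlgebraic M (f.coeff n) := by
  let _ : Algebra M⸨X⸩ L⸨X⸩ := (lsMap (algebraMap M L)).toAlgebra
  have : IsScalarTower M⟦X⟧ M⸨X⸩ L⸨X⸩ :=
    .of_algebraMap_eq fun g ↦ (lsMap_coe_powerSeries (algebraMap M L) g).symm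
  have : IsScalarTower M⟦X⟧ L⟦X⟧ L⸨X⸩ := .of_algebraMap_eq fun _ ↦ rfl
  have hg : IsAlgebraic M⟦X⟧ f.powerSeriesPart := by
    rw [← isAlgebraic_algebraMap_iff (A := L⸨X⸩) (IsFractionRing.injective L⟦X⟧ L⸨X⸩),
      IsFractionRing.isAlgebraic_iff M⟦X⟧ M⸨X⸩ L⸨X⸩]
    change IsAlgebraic M⸨X⸩ (f.powerSeriesPart : L⸨X⸩)
    rw [LaurentSeries.ofPowerSeries_powerSeriesPart, ← map_one (algebraMap M L), ← lsMap_single]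
    exact (isAlgebraic_algebraMap _).mul (isAlgebraic_of_fieldRange_le hF hf)
  rcases lt_or_ge n f.order with hlt | hge
  · rw [HahnSeries.coeff_eq_zero_of_lt_order hlt]
    exact isAlgebraic_zero
  · obtain ⟨m, rfl⟩ := Int.le.dest hge
    rw [← LaurentSeries.powerSeriesPart_coeff]
    exact isAlgebraic_powerSeries_coeff hg m

end LaurentSeries

section RatFunc

theorem fieldRange_le_of_C_mem_of_X_mem {F K : Type*} [Field F] [Field K] (ψ : RatFunc F →+* K)
    (S : Subfield K) (hC : ∀ a, ψ (RatFunc.C a) ∈ S) (hX : ψ RatFunc.X ∈ S) :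
    ψ.fieldRange ≤ S := by
  rintro _ ⟨f, rfl⟩
  have hpoly (q : F[X]) : ψ (algebraMap F[X] (RatFunc F) q) ∈ S := by
    induction q using Polynomial.induction_on' with
    | add u v hu hv => simpa only [map_add] using add_mem hu hv
    | monomial n a =>
      simpa only [← C_mul_X_pow_eq_monomial, map_mul, map_pow, RatFunc.algebraMap_C,
        RatFunc.algebraMap_X] using mul_mem (hC a) (pow_mem hX n)
  rw [← RatFunc.num_div_denom f, map_div₀]
  exact div_mem (hpoly _) (hpoly _)

variable {k : Type} [Field k]

theorem algebraMap_ratFunc_C (a : k) :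
    algebraMap (RatFunc k) (Kx k) (RatFunc.C a) = (HahnSeries.C a : LaurentSeries k) := by
  change RatFunc.coeAlgHom k (RatFunc.C a) = _
  rw [← RatFunc.algebraMap_C, (RatFunc.coeAlgHom k).commutes]
  simp

theorem algebraMap_ratFunc_X :
    algebraMap (RatFunc k) (Kx k) RatFunc.X =
      (HahnSeries.single (1 : ℤ) (1 : k) : LaurentSeries k) := by
  change RatFunc.coeAlgHom k RatFunc.X = _
  rw [← RatFunc.algebraMap_X, (RatFunc.coeAlgHom k).commutes]
  simp

theorem fieldRange_le_fieldRange_lsMap_algebraMap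
    (ψ : RatFunc (LaurentSeries k) →+* LaurentSeries (Kx k))
    (hψC : ∀ a : LaurentSeries k, ψ (RatFunc.C a) = lsMap (HahnSeries.C : k →+* Kx k) a)
    (hψX : ψ RatFunc.X = HahnSeries.C (HahnSeries.single (1 : ℤ) (1 : k) : Kx k)) :
    ψ.fieldRange ≤ (lsMap (algebraMap (RatFunc k) (Kx k))).fieldRange := by
  refine fieldRange_le_of_C_mem_of_X_mem ψ _ (fun a ↦ ⟨lsMap RatFunc.C a, ?_⟩)
    ⟨HahnSeries.C RatFunc.X, ?_⟩
  · rw [hψC]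
    ext i : 2
    exact algebraMap_ratFunc_C (a.coeff i)
  · rw [hψX]
    exact (lsMap_single _ 0 _).trans (congrArg _ algebraMap_ratFunc_X)

end RatFunc

section NotInduced

open scoped LaurentSeries

variable {p : ℕ} [Fact p.Prime] {F M L : Type*} [Field F] [Field M] [Field L] [CharP L p]
  [Algebra M L] {n : ℤ} {α : L}

variable (M) in
theorem irreducible_X_pow_sub_X_sub_C_single (hn : n < 0)
    (hpn : ¬ (p : ℤ) ∣ n) (hα : Transcendental M α) :
    Irreducible (X ^ p - X - C (HahnSeries.single n α) : L⸨X⸩[X]) := by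
  have := charP_laurentSeries p L
  refine irreducible_X_pow_sub_X_sub_C fun b hb ↦
    hα (isAlgebraic_of_isAlgebraic_coeff_single_sub hn hpn b fun i ↦ ?_)
  rw [hb, sub_self]
  exact isAlgebraic_zero

theorem artinSchreier_transcendental_not_induced_general [Algebra F L⸨X⸩]
    (hF : (algebraMap F L⸨X⸩).fieldRange ≤ (lsMap (algebraMap M L)).fieldRange)
    (hn : n < 0) (hpn : ¬ (p : ℤ) ∣ n) (hα : Transcendental M α) :
    Irreducible (X ^ p - X - C (HahnSeries.single n α) : L⸨X⸩[X]) ∧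
    (∀ [Fact (Irreducible (X ^ p - X - C (HahnSeries.single n α) : L⸨X⸩[X]))],
      IsGalois L⸨X⸩ (AdjoinRoot (X ^ p - X - C (HahnSeries.single n α) : L⸨X⸩[X])) ∧
      Module.finrank L⸨X⸩ (AdjoinRoot (X ^ p - X - C (HahnSeries.single n α) : L⸨X⸩[X])) = p) ∧
    ∀ (E' : Type*) [CommRing E'] [Algebra F E'],
      IsEmpty ((E' ⊗[F] L⸨X⸩) ≃ₐ[L⸨X⸩]
        AdjoinRoot (X ^ p - X - C (HahnSeries.single n α) : L⸨X⸩[X])) := by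
  have := charP_laurentSeries p L
  have hp : 1 < p := (Fact.out : p.Prime).one_lt
  have hirr := irreducible_X_pow_sub_X_sub_C_single M hn hpn hα
  refine ⟨hirr, ⟨isGalois_adjoinRoot_X_pow_sub_X_sub_C, finrank_adjoinRoot_X_pow_sub_X_sub_C hp _⟩,
    fun E' _ _ ↦ ⟨fun e ↦ hα ?_⟩⟩
  have := Fact.mk hirr
  have := isGalois_adjoinRoot_X_pow_sub_X_sub_C (a := HahnSeries.single n α)
  have := (monic_X_pow_sub_X_sub_C hp (HahnSeries.single n α)).finite_adjoinRoot
  obtain ⟨b, hb⟩ := exists_isAlgebraic_sub_pow_sub_self e (root_pow_sub_root_eq_of_dvd dvd_rfl)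
  exact isAlgebraic_of_isAlgebraic_coeff_single_sub hn hpn b (isAlgebraic_laurentSeries_coeff hF hb)

end NotInduced

set_option maxHeartbeats 1000000 in
/-- For `k` of characteristic `p` and `α ∈ k((x))` transcendental over `k(x)`, the
Artin–Schreier extension `E = k((x))((t))[Y]/(Y^p - Y - α·t⁻¹)` is Galois of degree `p`
over `k((x))((t))` but is not induced by any degree `p` field extension of
`k((t))(x)`. -/
theorem artinSchreier_transcendental_not_induced
    (p : ℕ) (hp : p.Prime) (k : Type) [Field k] [CharP k p]
    (α : Kx k) (hα : Transcendental (RatFunc k) α)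
    (ψ : RatFunc (LaurentSeries k) →+* LaurentSeries (Kx k))
    (hψC : ∀ a : LaurentSeries k,
      ψ (RatFunc.C a) = lsMap ((HahnSeries.C : k →+* Kx k)) a)
    (hψX : ψ RatFunc.X = HahnSeries.C ((HahnSeries.single (1 : ℤ) (1 : k) : Kx k))) :
    letI : Algebra (RatFunc (LaurentSeries k)) (LaurentSeries (Kx k)) := ψ.toAlgebra
    Irreducible (X ^ p - X - C (HahnSeries.single (-1 : ℤ) α) :
        Polynomial (LaurentSeries (Kx k))) ∧
    (∀ [Fact (Irreducible (X ^ p - X - C (HahnSeries.single (-1 : ℤ) α) :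
        Polynomial (LaurentSeries (Kx k))))],
      IsGalois (LaurentSeries (Kx k))
        (AdjoinRoot (X ^ p - X - C (HahnSeries.single (-1 : ℤ) α) :
          Polynomial (LaurentSeries (Kx k)))) ∧
      Module.finrank (LaurentSeries (Kx k))
        (AdjoinRoot (X ^ p - X - C (HahnSeries.single (-1 : ℤ) α) :
          Polynomial (LaurentSeries (Kx k)))) = p) ∧
    ¬ ∃ (E' : Type) (_ : Field E') (_ : Algebra (RatFunc (LaurentSeries k)) E'),
        Module.finrank (RatFunc (LaurentSeries k)) E' = p ∧
        Nonempty ((E' ⊗[RatFunc (LaurentSeries k)] LaurentSeries (Kx k))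
          ≃ₐ[LaurentSeries (Kx k)]
          AdjoinRoot (X ^ p - X - C (HahnSeries.single (-1 : ℤ) α) :
            Polynomial (LaurentSeries (Kx k)))) := by
  let _ : Algebra (RatFunc (LaurentSeries k)) (LaurentSeries (Kx k)) := ψ.toAlgebra
  have := Fact.mk hp
  have : CharP (Kx k) p :=
    charP_of_injective_algebraMap (algebraMap (RatFunc k) (Kx k)).injective p
  obtain ⟨hirr, hgal, hempty⟩ := artinSchreier_transcendental_not_induced_general
    (fieldRange_le_fieldRange_lsMap_algebraMap ψ hψC hψX) (n := -1) (by lia)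
    (by simpa [Int.natCast_dvd] using hp.one_lt.ne') hα
  exact ⟨hirr, hgal, fun ⟨E', _, _, _, ⟨e⟩⟩ ↦ (hempty E').false e⟩
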